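/- In the consecutive prime power construction: (a) for every nonzero β ∈ K, N_β · (I_{q+1} ⊗ I_q ⊗ J_q) = (I_{q+1} ⊗ I_q ⊗ J_q) · N_β = J_{(q+1)q²} − I_{q+1} ⊗ J_{q²}; (b) for every nonzero β ∈ K, N_β · (I_{q+1} ⊗ J_{q²}) = (I_{q+1} ⊗ J_{q²}) · N_β = q·(J_{(q+1)q²} − I_{q+1} ⊗ J_{q²}); (c) Σ_{β∈K∖{0}} N_β = (J_{q+1} − I_{q+1}) ⊗ (q·I_{q²} + (J_q − I_q) ⊗ J_q). -/

import Mathlib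

open Matrix Kronecker BigOperators

noncomputable section

/-- The all-ones matrix. -/
def allOnes (n : Type*) : Matrix n n ℝ := Matrix.of fun _ _ => 1

/-- The auxiliary matrix `C_α` for `α ∈ F`: the `((a,u),(b,v))`-entry is `1` iff
`v − u = α·(b − a)`. -/
def auxC {F : Type*} [Field F] [Fintype F] [DecidableEq F] (α : F) :
    Matrix (F × F) (F × F) ℝ :=
  Matrix.of fun p r => if r.2 - p.2 = α * (r.1 - p.1) then 1 else 0

/-- The permutation matrix `P_{β,γ}` with `(a,b)`-entry `1` iff `β·(−a+b) = γ`. -/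
def permP {K : Type*} [Field K] [DecidableEq K] (β γ : K) : Matrix K K ℝ :=
  Matrix.of fun a b => if β * (-a + b) = γ then 1 else 0

/-- The matrix `N_β = Σ_{γ∈K∖{0}} P_{β,γ} ⊗ C_{ψ(γ)}` of the consecutive prime power
construction, where `ψ : K∖{0} → F` is a fixed bijection. -/
def NN {F K : Type*} [Field F] [Fintype F] [DecidableEq F]
    [Field K] [Fintype K] [DecidableEq K]
    (ψ : {x : K // x ≠ 0} ≃ F) (β : K) :
    Matrix (K × (F × F)) (K × (F × F)) ℝ :=
  ∑ γ : {x : K // x ≠ 0}, permP β (γ : K) ⊗ₖ auxC (ψ γ)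

/-!
On the factor `F × F` the identities are incidence geometry of the affine plane. A line of slope `α`
meets every vertical line in exactly one point, so `C_α (I ⊗ J) = J`; two points on different
vertical lines are joined by exactly one line of finite slope, which gives `∑ α, C_α`. On the factor
`K`, the matrices `P_{β,γ}` with `γ ≠ 0` partition the off-diagonal positions, and the symmetry
`P_{β,γ} = P_{γ⁻¹,β⁻¹}` exchanges summation over `γ` with summation over `β`.
-/

section Kronecker

variable {ι l m n p R : Type*} [NonUnitalNonAssocSemiring R]

theorem sum_kronecker (s : Finset ι) (A : ι → Matrix l m R) (B : Matrix n p R) :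
    (∑ i ∈ s, A i) ⊗ₖ B = ∑ i ∈ s, A i ⊗ₖ B := by
  ext
  simp only [kroneckerMap_apply, Matrix.sum_apply, Finset.sum_mul]

theorem kronecker_sum (A : Matrix l m R) (s : Finset ι) (B : ι → Matrix n p R) :
    A ⊗ₖ (∑ i ∈ s, B i) = ∑ i ∈ s, A ⊗ₖ B i := by
  ext
  simp only [kroneckerMap_apply, Matrix.sum_apply, Finset.mul_sum]

end Kronecker

section AllOnes

variable {m n : Type*}

theorem transpose_allOnes : (allOnes n)ᵀ = allOnes n := rfl

theorem allOnes_mul_allOnes [Fintype n] :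
    allOnes n * allOnes n = (Fintype.card n : ℝ) • allOnes n := by
  ext
  simp [allOnes, mul_apply]

theorem allOnes_kronecker_allOnes : allOnes m ⊗ₖ allOnes n = allOnes (m × n) := by
  ext
  simp [allOnes]

theorem allOnes_sub_one_kronecker_allOnes [DecidableEq m] :
    (allOnes m - 1) ⊗ₖ allOnes n = allOnes (m × n) - (1 : Matrix m m ℝ) ⊗ₖ allOnes n := by
  rw [eq_sub_iff_add_eq, ← add_kronecker, sub_add_cancel, allOnes_kronecker_allOnes]

end AllOnes

section AuxC

variable {F : Type*} [Field F] [Fintype F] [DecidableEq F]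

theorem transpose_auxC (α : F) : (auxC α)ᵀ = auxC α := by
  ext ⟨a, u⟩ ⟨b, v⟩
  have swap : u - v = α * (a - b) ↔ v - u = α * (b - a) := by
    rw [← neg_inj, neg_sub, ← mul_neg, neg_sub]
  simp only [transpose_apply, auxC, of_apply, swap]

theorem auxC_mul_one_kronecker_allOnes (α : F) :
    auxC α * ((1 : Matrix F F ℝ) ⊗ₖ allOnes F) = allOnes (F × F) := by
  ext ⟨a, u⟩ ⟨b, v⟩
  simp [mul_apply, Fintype.sum_prod_type, auxC, allOnes, one_apply, sub_eq_iff_eq_add]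

theorem one_kronecker_allOnes_mul_auxC (α : F) :
    ((1 : Matrix F F ℝ) ⊗ₖ allOnes F) * auxC α = allOnes (F × F) := by
  simpa only [transpose_mul, ← kroneckerMap_transpose, transpose_one, transpose_allOnes,
    transpose_auxC] using congrArg transpose (auxC_mul_one_kronecker_allOnes α)

theorem auxC_mul_allOnes (α : F) :
    auxC α * allOnes (F × F) = (Fintype.card F : ℝ) • allOnes (F × F) :=
  calc auxC α * allOnes (F × F)
      = auxC α * ((1 ⊗ₖ allOnes F) * (allOnes F ⊗ₖ 1)) := by
        rw [← mul_kronecker_mul, one_mul, mul_one, allOnes_kronecker_allOnes]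
    _ = (allOnes F ⊗ₖ allOnes F) * (allOnes F ⊗ₖ 1) := by
        rw [← Matrix.mul_assoc, auxC_mul_one_kronecker_allOnes, allOnes_kronecker_allOnes]
    _ = (Fintype.card F : ℝ) • allOnes (F × F) := by
        rw [← mul_kronecker_mul, mul_one, allOnes_mul_allOnes, smul_kronecker,
          allOnes_kronecker_allOnes]

theorem allOnes_mul_auxC (α : F) :
    allOnes (F × F) * auxC α = (Fintype.card F : ℝ) • allOnes (F × F) := by
  simpa only [transpose_mul, transpose_smul, transpose_allOnes, transpose_auxC] using
    congrArg transpose (auxC_mul_allOnes α)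

theorem sum_auxC :
    ∑ α : F, auxC α =
      (Fintype.card F : ℝ) • (1 : Matrix (F × F) (F × F) ℝ) + (allOnes F - 1) ⊗ₖ allOnes F := by
  ext ⟨a, u⟩ ⟨b, v⟩
  by_cases hab : a = b
  · subst hab
    simp [Matrix.sum_apply, auxC, allOnes, one_apply, sub_eq_zero, eq_comm]
  · have slope (α : F) : v - u = α * (b - a) ↔ (v - u) / (b - a) = α :=
      (div_eq_iff (sub_ne_zero.2 (Ne.symm hab))).symm
    simp [Matrix.sum_apply, auxC, allOnes, slope, hab]

end AuxC

section PermP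

variable {K : Type*} [Field K] [DecidableEq K]

theorem permP_zero {β : K} (hβ : β ≠ 0) : permP β 0 = 1 := by
  ext a b
  simp [permP, one_apply, hβ, neg_add_eq_zero]

theorem permP_inv_inv {β γ : K} (hβ : β ≠ 0) (hγ : γ ≠ 0) : permP γ⁻¹ β⁻¹ = permP β γ := by
  ext a b
  have swap : γ⁻¹ * (-a + b) = β⁻¹ ↔ β * (-a + b) = γ := by
    rw [inv_mul_eq_iff_eq_mul₀ hγ, eq_mul_inv_iff_mul_eq₀ hβ, mul_comm]
  simp only [permP, of_apply, swap]

variable [Fintype K]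

theorem sum_permP (β : K) : ∑ γ : K, permP β γ = allOnes K := by
  ext a b
  simp [Matrix.sum_apply, permP, allOnes]

theorem sum_permP_right {β : K} (hβ : β ≠ 0) :
    ∑ γ : {x : K // x ≠ 0}, permP β (γ : K) = allOnes K - 1 := by
  rw [eq_sub_iff_add_eq', ← permP_zero hβ, ← Fintype.sum_eq_add_sum_subtype_ne, sum_permP]

theorem sum_permP_left {γ : K} (hγ : γ ≠ 0) :
    ∑ β : {x : K // x ≠ 0}, permP (β : K) γ = allOnes K - 1 := by
  let inversion : {x : K // x ≠ 0} ≃ {x : K // x ≠ 0} :=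
    (Equiv.inv K).subtypeEquiv fun _ => not_congr inv_eq_zero.symm
  calc ∑ β : {x : K // x ≠ 0}, permP (β : K) γ
      = ∑ β, permP γ⁻¹ (inversion β : K) :=
        Finset.sum_congr rfl fun β _ => (permP_inv_inv β.2 hγ).symm
    _ = ∑ δ : {x : K // x ≠ 0}, permP γ⁻¹ (δ : K) :=
        inversion.sum_comp fun δ => permP γ⁻¹ (δ : K)
    _ = allOnes K - 1 := sum_permP_right (inv_ne_zero hγ)

end PermP

section NN

variable {F K : Type*} [Field F] [Fintype F] [DecidableEq F] [Field K] [Fintype K] [DecidableEq K]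
  (ψ : {x : K // x ≠ 0} ≃ F)

theorem NN_mul_one_kronecker {n : Type*} {β : K} (hβ : β ≠ 0) {B D : Matrix (F × F) n ℝ}
    (hBD : ∀ α : F, auxC α * B = D) :
    NN ψ β * ((1 : Matrix K K ℝ) ⊗ₖ B) = (allOnes K - 1) ⊗ₖ D := by
  simp only [NN, Matrix.sum_mul, ← mul_kronecker_mul, mul_one, hBD, ← sum_kronecker,
    sum_permP_right hβ]

theorem one_kronecker_mul_NN {n : Type*} {β : K} (hβ : β ≠ 0) {B D : Matrix n (F × F) ℝ}
    (hBD : ∀ α : F, B * auxC α = D) :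
    ((1 : Matrix K K ℝ) ⊗ₖ B) * NN ψ β = (allOnes K - 1) ⊗ₖ D := by
  simp only [NN, Matrix.mul_sum, ← mul_kronecker_mul, one_mul, hBD, ← sum_kronecker,
    sum_permP_right hβ]

theorem sum_NN :
    ∑ β : {x : K // x ≠ 0}, NN ψ (β : K) = (allOnes K - 1) ⊗ₖ ∑ α : F, auxC α :=
  calc ∑ β : {x : K // x ≠ 0}, NN ψ (β : K)
      = ∑ γ : {x : K // x ≠ 0}, (∑ β : {x : K // x ≠ 0}, permP (β : K) (γ : K)) ⊗ₖ auxC (ψ γ) := by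
        simp only [NN, sum_kronecker]
        exact Finset.sum_comm
    _ = ∑ γ, (allOnes K - 1) ⊗ₖ auxC (ψ γ) :=
        Finset.sum_congr rfl fun γ _ => by rw [sum_permP_left γ.2]
    _ = (allOnes K - 1) ⊗ₖ ∑ α : F, auxC α := by
        rw [← kronecker_sum, ψ.sum_comp auxC]

end NN

/-- In the consecutive prime power construction:
(a) `N_β · (I_{q+1} ⊗ I_q ⊗ J_q) = (I_{q+1} ⊗ I_q ⊗ J_q) · N_β = J − I_{q+1} ⊗ J_{q²}`;
(b) `N_β · (I_{q+1} ⊗ J_{q²}) = (I_{q+1} ⊗ J_{q²}) · N_β = q·(J − I_{q+1} ⊗ J_{q²})`;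
(c) `Σ_{β∈K∖{0}} N_β = (J_{q+1} − I_{q+1}) ⊗ (q·I_{q²} + (J_q − I_q) ⊗ J_q)`. -/
theorem NN_mul_blockdiag_sum {F K : Type*} [Field F] [Fintype F] [DecidableEq F]
    [Field K] [Fintype K] [DecidableEq K]
    (hcard : Fintype.card K = Fintype.card F + 1)
    (ψ : {x : K // x ≠ 0} ≃ F) :
    (∀ β : K, β ≠ 0 →
      NN ψ β * ((1 : Matrix K K ℝ) ⊗ₖ ((1 : Matrix F F ℝ) ⊗ₖ allOnes F)) =
          allOnes (K × (F × F)) - (1 : Matrix K K ℝ) ⊗ₖ allOnes (F × F) ∧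
        ((1 : Matrix K K ℝ) ⊗ₖ ((1 : Matrix F F ℝ) ⊗ₖ allOnes F)) * NN ψ β =
          allOnes (K × (F × F)) - (1 : Matrix K K ℝ) ⊗ₖ allOnes (F × F)) ∧
    (∀ β : K, β ≠ 0 →
      NN ψ β * ((1 : Matrix K K ℝ) ⊗ₖ allOnes (F × F)) =
          (Fintype.card F : ℝ) •
            (allOnes (K × (F × F)) - (1 : Matrix K K ℝ) ⊗ₖ allOnes (F × F)) ∧
        ((1 : Matrix K K ℝ) ⊗ₖ allOnes (F × F)) * NN ψ β =
          (Fintype.card F : ℝ) •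
            (allOnes (K × (F × F)) - (1 : Matrix K K ℝ) ⊗ₖ allOnes (F × F))) ∧
    (∑ β : {x : K // x ≠ 0}, NN ψ (β : K)) =
      (allOnes K - 1) ⊗ₖ
        ((Fintype.card F : ℝ) • (1 : Matrix (F × F) (F × F) ℝ) +
          (allOnes F - 1) ⊗ₖ allOnes F) := by
  refine ⟨fun β hβ => ⟨?_, ?_⟩, fun β hβ => ⟨?_, ?_⟩, ?_⟩
  · rw [NN_mul_one_kronecker ψ hβ auxC_mul_one_kronecker_allOnes,
      allOnes_sub_one_kronecker_allOnes]
  · rw [one_kronecker_mul_NN ψ hβ one_kronecker_allOnes_mul_auxC,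
      allOnes_sub_one_kronecker_allOnes]
  · rw [NN_mul_one_kronecker ψ hβ auxC_mul_allOnes, kronecker_smul,
      allOnes_sub_one_kronecker_allOnes]
  · rw [one_kronecker_mul_NN ψ hβ allOnes_mul_auxC, kronecker_smul,
      allOnes_sub_one_kronecker_allOnes]
  · rw [sum_NN, sum_auxC]
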